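/- Assume Condition (★) in full. Then for every i ∈ {2,…,n}, every initial condition (x_1,…,x_n), and every t ≥ 0, ‖Π_i ∘ Lin^{∘t}(x_1,…,x_n) − L_i^{t} pert_i(x_1,…,x_i)‖_{ℂ^{d_i}} ≤ ( Σ_{j=1}^{i−1} ‖D_{i,j}‖ · ‖pert_j(x_1,…,x_j)‖_{ℂ^{d_j}} ) · ‖L_i‖^{t}. -/

import Mathlib

/-!
The matrices `D i j` are built so that they solve the Sylvester equations
`L_{i+1} D_{i+1,j} - D_{i+1,j} L_j = C_{i+1,i} D_{i,j}` for `j ≤ i`: in the eigenbases of `L_{i+1}`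
and `L_j`, this is the entrywise identity that defines `D_{i+1,j}`, and disjointness of the
spectra makes it solvable (`Dmat_sylvester`). Consequently each family
`(-1)^(i-j) D_{i,j} L_j^t p`, `i ≥ j`, is a solution of the cascade, and the perturbation maps
select the superposition of these solutions that has the prescribed initial value. This gives the
explicit solution formula
`x_i(t) = ∑_{j ≤ i} (-1)^(i-j) D_{i,j} L_j^t pert_j` (`iterate_formula`). The term `j = i` is
`L_i^t pert_i`, and the remaining terms are estimated using `‖L_j‖ ≤ ‖L_i‖` for `j ≤ i`.
-/

open Matrix Finset Filter Topology

noncomputable section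

/-- A matrix acting as a continuous linear map between Euclidean spaces. -/
def matCLM {p q : ℕ} (M : Matrix (Fin p) (Fin q) ℂ) :
    EuclideanSpace ℂ (Fin q) →L[ℂ] EuclideanSpace ℂ (Fin p) :=
  LinearMap.toContinuousLinearMap (Matrix.toEuclideanLin M)

/-- Operator norm of a matrix induced by the Euclidean norms. -/
def opN {p q : ℕ} (M : Matrix (Fin p) (Fin q) ℂ) : ℝ := ‖matCLM M‖

/-- One step of the chained linear cascade (levels indexed from `0`). -/
def LinStep {d : ℕ → ℕ} (L : ∀ i, Matrix (Fin (d i)) (Fin (d i)) ℂ)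
    (C : ∀ i, Matrix (Fin (d (i+1))) (Fin (d i)) ℂ)
    (x : ∀ i, EuclideanSpace ℂ (Fin (d i))) (i : ℕ) :
    EuclideanSpace ℂ (Fin (d i)) :=
  match i with
  | 0 => matCLM (L 0) (x 0)
  | (i+1) => matCLM (L (i+1)) (x (i+1)) + matCLM (C i) (x i)

/-- The matrices `D_{i,j}` of the paper (levels indexed from `0`). -/
def Dmat {d : ℕ → ℕ} (L : ∀ i, Matrix (Fin (d i)) (Fin (d i)) ℂ)
    (C : ∀ i, Matrix (Fin (d (i+1))) (Fin (d i)) ℂ)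
    (V : ∀ i, Matrix (Fin (d i)) (Fin (d i)) ℂ)
    (ev : ∀ i, Fin (d i) → ℂ) : ∀ i j : ℕ, Matrix (Fin (d i)) (Fin (d j)) ℂ
  | 0, 0 => 1
  | 0, _ + 1 => 0
  | i + 1, j =>
    if h : j = i + 1 then by subst h; exact 1
    else
      (L (i+1))⁻¹ * V (i+1) *
        Matrix.of (fun ℓ m =>
          ((V (i+1))⁻¹ * C i * Dmat L C V ev i j * V j) ℓ m
            * (1 - ev j m / ev (i+1) ℓ)⁻¹) * (V j)⁻¹

/-- The perturbation maps `pert_i` of the paper (levels indexed from `0`). -/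
def pert {d : ℕ → ℕ} (L : ∀ i, Matrix (Fin (d i)) (Fin (d i)) ℂ)
    (C : ∀ i, Matrix (Fin (d (i+1))) (Fin (d i)) ℂ)
    (V : ∀ i, Matrix (Fin (d i)) (Fin (d i)) ℂ)
    (ev : ∀ i, Fin (d i) → ℂ)
    (x : ∀ k, EuclideanSpace ℂ (Fin (d k))) : ∀ i : ℕ, EuclideanSpace ℂ (Fin (d i))
  | 0 => x 0
  | i + 1 => x (i+1) + ∑ j ∈ (Finset.range (i+1)).attach,
      ((-1 : ℂ) ^ (i - j.1)) • matCLM (Dmat L C V ev (i+1) j.1) (pert L C V ev x j.1)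
  termination_by i => i
  decreasing_by exact Finset.mem_range.mp j.2

/-- The `s`-th principal eigenfunction of component system `i`. -/
def psi {d : ℕ → ℕ} (V : ∀ i, Matrix (Fin (d i)) (Fin (d i)) ℂ) (i : ℕ) (s : Fin (d i)) :
    EuclideanSpace ℂ (Fin (d i)) →L[ℂ] ℂ :=
  (EuclideanSpace.proj s).comp (matCLM (V i)⁻¹)

lemma matCLM_mul {p q r : ℕ} (M : Matrix (Fin p) (Fin q) ℂ) (N : Matrix (Fin q) (Fin r) ℂ)
    (v : EuclideanSpace ℂ (Fin r)) : matCLM (M * N) v = matCLM M (matCLM N v) := by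
  simp [matCLM, Matrix.toLpLin_apply, Matrix.mulVec_mulVec]

lemma matCLM_one {p : ℕ} (v : EuclideanSpace ℂ (Fin p)) :
    matCLM (1 : Matrix (Fin p) (Fin p) ℂ) v = v := by
  simp [matCLM]

lemma matCLM_add {p q : ℕ} (M N : Matrix (Fin p) (Fin q) ℂ) (v : EuclideanSpace ℂ (Fin q)) :
    matCLM (M + N) v = matCLM M v + matCLM N v := by
  simp [matCLM]

lemma norm_matCLM_pow_le {p : ℕ} (M : Matrix (Fin p) (Fin p) ℂ) (t : ℕ)
    (v : EuclideanSpace ℂ (Fin p)) : ‖matCLM (M ^ t) v‖ ≤ opN M ^ t * ‖v‖ := by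
  induction t with
  | zero => simp [matCLM_one]
  | succ t ih =>
    rw [pow_succ', matCLM_mul, pow_succ', mul_assoc]
    exact ((matCLM M).le_opNorm _).trans
      (mul_le_mul_of_nonneg_left ih (norm_nonneg (matCLM M)))

section Cascade

variable {d : ℕ → ℕ} (L : ∀ i, Matrix (Fin (d i)) (Fin (d i)) ℂ)
  (C : ∀ i, Matrix (Fin (d (i+1))) (Fin (d i)) ℂ)
  (V : ∀ i, Matrix (Fin (d i)) (Fin (d i)) ℂ)
  (ev : ∀ i, Fin (d i) → ℂ)

lemma Dmat_self (i : ℕ) : Dmat L C V ev i i = 1 := by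
  cases i <;> simp [Dmat]

lemma pert_succ (x : ∀ i, EuclideanSpace ℂ (Fin (d i))) (i : ℕ) :
    pert L C V ev x (i+1) = x (i+1) + ∑ j ∈ Finset.range (i+1),
      ((-1 : ℂ) ^ (i - j)) • matCLM (Dmat L C V ev (i+1) j) (pert L C V ev x j) := by
  rw [pert]
  congr 1
  exact Finset.sum_attach (Finset.range (i+1))
    (fun j => ((-1 : ℂ) ^ (i - j)) • matCLM (Dmat L C V ev (i+1) j) (pert L C V ev x j))

/-- The Sylvester equation characterising `D_{i+1,j}` in terms of `D_{i,j}`. -/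
lemma Dmat_sylvester
    (hdiag : ∀ i, L i = V i * Matrix.diagonal (ev i) * (V i)⁻¹)
    (hV : ∀ i, IsUnit (V i)) (hLu : ∀ i, IsUnit (L i))
    (hsp : ∀ i j : ℕ, i ≠ j → ∀ ℓ m, ev i ℓ ≠ ev j m)
    (i j : ℕ) (hj : j ≠ i + 1) :
    L (i+1) * Dmat L C V ev (i+1) j
      = Dmat L C V ev (i+1) j * L j + C i * Dmat L C V ev i j := by
  have hVd := fun k => (Matrix.isUnit_iff_isUnit_det _).1 (hV k)
  have hLd := fun k => (Matrix.isUnit_iff_isUnit_det _).1 (hLu k)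
  have hVi := Matrix.nonsing_inv_mul _ (hVd (i+1))
  have hVj := Matrix.nonsing_inv_mul _ (hVd j)
  have hVi' := Matrix.mul_nonsing_inv _ (hVd (i+1))
  have hVj' := Matrix.mul_nonsing_inv _ (hVd j)
  have hLi := Matrix.mul_nonsing_inv _ (hLd (i+1))
  have hLi' := Matrix.nonsing_inv_mul _ (hLd (i+1))
  -- Invertibility of `L (i+1)` forces its eigenvalues to be nonzero.
  have hne : ∀ l, ev (i+1) l ≠ 0 := by
    have h := hLd (i+1)
    rw [hdiag (i+1), Matrix.det_mul, Matrix.det_mul, Matrix.det_diagonal] at h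
    have h0 := left_ne_zero_of_mul h.ne_zero
    have h1 := right_ne_zero_of_mul h0
    exact fun l => Finset.prod_ne_zero_iff.1 h1 l (Finset.mem_univ l)
  obtain ⟨X, hX⟩ : ∃ X, X = (V (i+1))⁻¹ * C i * Dmat L C V ev i j * V j := ⟨_, rfl⟩
  obtain ⟨T, hT⟩ : ∃ T : Matrix (Fin (d (i+1))) (Fin (d j)) ℂ,
    T = Matrix.of (fun l m => X l m * (1 - ev j m / ev (i+1) l)⁻¹) := ⟨_, rfl⟩
  have hD : Dmat L C V ev (i+1) j = (L (i+1))⁻¹ * V (i+1) * T * (V j)⁻¹ := by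
    rw [Dmat, dif_neg hj, hT, hX]
  have hTX : Matrix.diagonal (ev (i+1)) * T
      = T * Matrix.diagonal (ev j) + Matrix.diagonal (ev (i+1)) * X := by
    ext l m
    have h1 := hne l
    have h2 : ev (i+1) l - ev j m ≠ 0 := sub_ne_zero.2 (hsp _ _ (Ne.symm hj) l m)
    have h3 : 1 - ev j m / ev (i+1) l = (ev (i+1) l - ev j m) / ev (i+1) l := by
      field_simp
    simp only [hT, Matrix.add_apply, Matrix.diagonal_mul, Matrix.mul_diagonal, Matrix.of_apply, h3]
    field_simp
    ring
  have hLV : L (i+1) * V (i+1) = V (i+1) * Matrix.diagonal (ev (i+1)) := by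
    rw [hdiag (i+1), Matrix.mul_assoc, hVi, Matrix.mul_one]
  have hVL : (V j)⁻¹ * L j = Matrix.diagonal (ev j) * (V j)⁻¹ := by
    rw [hdiag j, ← Matrix.mul_assoc, ← Matrix.mul_assoc, hVj, Matrix.one_mul]
  have hXC : V (i+1) * X * (V j)⁻¹ = C i * Dmat L C V ev i j := by
    rw [hX]
    simp only [Matrix.mul_assoc]
    rw [hVj', Matrix.mul_one, ← Matrix.mul_assoc, hVi', Matrix.one_mul]
  -- It suffices to check the equation after multiplication by `L (i+1)` on the left.
  have key : L (i+1) * (V (i+1) * T * (V j)⁻¹)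
      = L (i+1) * (Dmat L C V ev (i+1) j * L j + C i * Dmat L C V ev i j) := by
    calc L (i+1) * (V (i+1) * T * (V j)⁻¹)
        = (L (i+1) * V (i+1)) * T * (V j)⁻¹ := by simp only [Matrix.mul_assoc]
      _ = V (i+1) * (Matrix.diagonal (ev (i+1)) * T) * (V j)⁻¹ := by
          rw [hLV]; simp only [Matrix.mul_assoc]
      _ = V (i+1) * T * (Matrix.diagonal (ev j) * (V j)⁻¹)
            + (V (i+1) * Matrix.diagonal (ev (i+1))) * X * (V j)⁻¹ := by
          rw [hTX]; simp only [Matrix.mul_add, Matrix.add_mul, Matrix.mul_assoc]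
      _ = V (i+1) * T * ((V j)⁻¹ * L j) + L (i+1) * (V (i+1) * X * (V j)⁻¹) := by
          rw [← hVL, ← hLV]; simp only [Matrix.mul_assoc]
      _ = (L (i+1) * (L (i+1))⁻¹) * (V (i+1) * T * ((V j)⁻¹ * L j))
            + L (i+1) * (C i * Dmat L C V ev i j) := by
          rw [hXC, hLi, Matrix.one_mul]
      _ = _ := by
          rw [hD, Matrix.mul_add]; simp only [Matrix.mul_assoc]
  calc L (i+1) * Dmat L C V ev (i+1) j
      = (L (i+1) * (L (i+1))⁻¹) * (V (i+1) * T * (V j)⁻¹) := by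
        rw [hD]; simp only [Matrix.mul_assoc]
    _ = (L (i+1))⁻¹ * (L (i+1) * (V (i+1) * T * (V j)⁻¹)) := by
        rw [hLi, ← hLi', Matrix.mul_assoc]
    _ = _ := by rw [key, ← Matrix.mul_assoc, hLi', Matrix.one_mul]

/-- Explicit solution of the cascade. -/
lemma iterate_formula
    (hdiag : ∀ i, L i = V i * Matrix.diagonal (ev i) * (V i)⁻¹)
    (hV : ∀ i, IsUnit (V i)) (hLu : ∀ i, IsUnit (L i))
    (hsp : ∀ i j : ℕ, i ≠ j → ∀ ℓ m, ev i ℓ ≠ ev j m)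
    (x : ∀ i, EuclideanSpace ℂ (Fin (d i))) (t i : ℕ) :
    (LinStep L C)^[t] x i = ∑ j ∈ Finset.range (i+1), ((-1 : ℂ) ^ (i - j)) •
      matCLM (Dmat L C V ev i j) (matCLM (L j ^ t) (pert L C V ev x j)) := by
  induction t generalizing i with
  | zero =>
    cases i with
    | zero => simp [Dmat_self, matCLM_one, pert]
    | succ i =>
      rw [Finset.sum_range_succ, Dmat_self]
      simp only [Function.iterate_zero, id, pow_zero, matCLM_one, Nat.sub_self, one_smul]
      rw [pert_succ, add_left_comm, ← Finset.sum_add_distrib, Finset.sum_eq_zero, add_zero]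
      intro j hj
      have hji : j ≤ i := Nat.lt_succ_iff.1 (Finset.mem_range.1 hj)
      rw [Nat.succ_sub hji, pow_succ, mul_neg_one, neg_smul, neg_add_cancel]
  | succ t ih =>
    rw [Function.iterate_succ_apply']
    cases i with
    | zero =>
      simp only [LinStep]
      rw [ih 0]
      simp [Dmat_self, matCLM_one, pow_succ', matCLM_mul]
    | succ i =>
      simp only [LinStep]
      rw [ih (i+1), ih i, Finset.sum_range_succ, Finset.sum_range_succ _ (i+1)]
      simp only [Dmat_self, matCLM_one, Nat.sub_self, pow_zero, one_smul, map_add, map_sum,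
        map_smul]
      rw [add_right_comm, ← Finset.sum_add_distrib, pow_succ' (L (i+1)), matCLM_mul]
      congr 1
      refine Finset.sum_congr rfl fun j hj => ?_
      have hji : j ≤ i := Nat.lt_succ_iff.1 (Finset.mem_range.1 hj)
      have hS := Dmat_sylvester L C V ev hdiag hV hLu hsp i j (by omega)
      rw [← matCLM_mul (L (i+1)), hS, matCLM_add, matCLM_mul, matCLM_mul, pow_succ' (L j),
        matCLM_mul (L j), Nat.succ_sub hji, pow_succ]
      module

end Cascade

/-- bound with the decay rate `‖L_i‖^t`, Condition (★) in full.
Levels are indexed from `0`: the paper's level `i ∈ {2,…,n}` is `i+1` here and the paper's sum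
`∑_{j=1}^{i−1}` becomes `j ∈ Finset.range (i+1)`. Condition (★)(iii)
`‖L_1‖ < ‖L_2‖ < ⋯ < ‖L_n‖ ≤ 1` is `hmono` together with `hone`. -/
theorem stmt4 {d : ℕ → ℕ} (L : ∀ i, Matrix (Fin (d i)) (Fin (d i)) ℂ)
    (C : ∀ i, Matrix (Fin (d (i+1))) (Fin (d i)) ℂ)
    (V : ∀ i, Matrix (Fin (d i)) (Fin (d i)) ℂ)
    (ev : ∀ i, Fin (d i) → ℂ)
    (hdiag : ∀ i, L i = V i * Matrix.diagonal (ev i) * (V i)⁻¹)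
    (hV : ∀ i, IsUnit (V i))
    (hLu : ∀ i, IsUnit (L i))
    (hsp : ∀ i j : ℕ, i ≠ j → ∀ ℓ m, ev i ℓ ≠ ev j m)
    (hmono : ∀ i, opN (L i) < opN (L (i+1)))
    (hone : ∀ i, opN (L i) ≤ 1)
    (x : ∀ i, EuclideanSpace ℂ (Fin (d i))) (i t : ℕ) :
    ‖(LinStep L C)^[t] x (i+1) - matCLM ((L (i+1)) ^ t) (pert L C V ev x (i+1))‖
      ≤ (∑ j ∈ Finset.range (i+1),
          opN (Dmat L C V ev (i+1) j) * ‖pert L C V ev x j‖) * opN (L (i+1)) ^ t := by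
  have hmon : Monotone fun k => opN (L k) := monotone_nat_of_le_succ fun k => (hmono k).le
  rw [iterate_formula L C V ev hdiag hV hLu hsp, Finset.sum_range_succ, Dmat_self]
  simp only [Nat.sub_self, pow_zero, one_smul, matCLM_one, add_sub_cancel_right]
  rw [Finset.sum_mul]
  refine norm_sum_le_of_le _ fun j hj => ?_
  have hL : opN (L j) ≤ opN (L (i+1)) := hmon (Finset.mem_range.1 hj).le
  have h0 : 0 ≤ opN (L j) := norm_nonneg _
  rw [norm_smul, norm_pow, norm_neg, norm_one, one_pow, one_mul, mul_assoc]
  refine ((matCLM _).le_opNorm _).trans (mul_le_mul_of_nonneg_left ?_ (norm_nonneg _))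
  rw [mul_comm]
  exact (norm_matCLM_pow_le _ _ _).trans
    (mul_le_mul_of_nonneg_right (pow_le_pow_left₀ h0 hL t) (norm_nonneg _))
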